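/- arXiv:2602.20625 — 2 statements merged into one kernel-verified Lean document; each statement's English description precedes it below -/
import Mathlib

section
/- Let k ≥ 2 be a fixed integer and set δ = 1 if k is odd and δ = 2 if k is even. Let R̃_k(X) = (1 − 2X)(1 + X) + 2X^{k+δ}, a polynomial of degree k + δ, and assume that R̃_k has k + δ pairwise distinct complex roots β_1, …, β_{k+δ}. For n ≥ 1, let E_k(n) be the number of compositions m of n with B(m) even and O_k(n) the number with B(m) odd. Then for every n ≥ 1, as identities in ℂ: E_k(n) = 2^{n−2} + (1/2)·Σ_{j=1}^{k+δ} C̃_j·β_j^{−n} and O_k(n) = 2^{n−2} − (1/2)·Σ_{j=1}^{k+δ} C̃_j·β_j^{−n}, where C̃_j = −(1 − β_j²)/(β_j·R̃_k'(β_j)). -/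
/-- The number of parts of a composition that are even and strictly greater than `k`. -/
def Bstat (k : ℕ) {n : ℕ} (m : Composition n) : ℕ :=
  m.blocks.countP fun j => decide (Even j ∧ k < j)

/-!
`E_k(n) + O_k(n)` is the number `2 ^ (n - 1)` of compositions of `n`, so it suffices to compute the
signed count `E_k(n) - O_k(n) = ∑ (-1) ^ B(m)`. The sign is a product over the parts, so splitting
off the first part gives the generating series `A = 1 / (1 - W)`, where `W = ∑ ± X ^ j` over
`j ≥ 1`. The number `N = k + δ` is the least even integer above `k`, i.e. `N` is even and
`k < N ≤ k + 2`; the minus signs sit at the even `j ≥ N`, whence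
`W = X / (1 - X) - 2 X ^ N / (1 - X ^ 2)` and `A = (1 - X ^ 2) / R̃_k`. The formula is the partial
fraction expansion of this quotient.
-/

section PartialFractions

open Polynomial

variable {K ι : Type*} [Field K] [Fintype ι] {β : ι → K} {P R : K[X]}

theorem eq_C_leadingCoeff_mul_nodal (hdeg : R.degree = Fintype.card ι)
    (hβ : Function.Injective β) (hroot : ∀ j, R.IsRoot (β j)) :
    R = C R.leadingCoeff * Lagrange.nodal Finset.univ β := by
  have hlead : R.leadingCoeff ≠ 0 := leadingCoeff_ne_zero.mpr (degree_ne_bot.mp (by simp [hdeg]))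
  refine eq_of_degree_le_of_eval_index_eq Finset.univ hβ.injOn hdeg.le ?_ ?_ fun j hj => ?_
  · rw [degree_C_mul hlead, Lagrange.degree_nodal, hdeg, Finset.card_univ]
  · rw [leadingCoeff_C_mul_of_isUnit hlead.isUnit, Lagrange.nodal_monic.leadingCoeff, mul_one]
  · rw [(hroot j).eq_zero, eval_mul, Lagrange.eval_nodal_at_node hj, mul_zero]

theorem sum_C_eval_div_eval_derivative_mul_div_X_sub_C (hdeg : R.degree = Fintype.card ι)
    (hP : P.degree < R.degree) (hβ : Function.Injective β) (hroot : ∀ j, R.IsRoot (β j)) :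
    ∑ j, C (P.eval (β j) / R.derivative.eval (β j)) * (R / (X - C (β j))) = P := by
  classical
  have hlead : R.leadingCoeff ≠ 0 := leadingCoeff_ne_zero.mpr (ne_zero_of_degree_gt hP)
  have hR := eq_C_leadingCoeff_mul_nodal hdeg hβ hroot
  generalize R.leadingCoeff = c at hR hlead
  have hinterp := Lagrange.eq_interpolate (s := Finset.univ) hβ.injOn (hP.trans_eq hdeg)
  rw [Lagrange.interpolate_eq_nodalWeight_mul_nodal_div_X_sub_C] at hinterp
  refine Eq.trans (Finset.sum_congr rfl fun j hj => ?_) hinterp.symm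
  rw [Lagrange.nodalWeight_eq_eval_derivative_nodal hj, hR, derivative_C_mul, eval_C_mul,
    EuclideanDomain.mul_div_assoc _ (Lagrange.X_sub_C_dvd_nodal β hj), ← mul_assoc, ← C_mul,
    mul_right_comm, ← C_mul]
  congr 2
  field_simp

theorem invUnitsSub_mul_coe_of_isRoot {a : Kˣ} (ha : R.IsRoot a) :
    PowerSeries.invUnitsSub a * (R : PowerSeries K) =
      -((R / (X - C (a : K)) : K[X]) : PowerSeries K) := by
  have hgeom := PowerSeries.invUnitsSub_mul_sub a
  conv_lhs => rw [← mul_div_eq_iff_isRoot.mpr ha, coe_mul, coe_sub, coe_X, coe_C]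
  linear_combination (-((R / (X - C (a : K)) : K[X]) : PowerSeries K)) * hgeom

theorem eq_sum_C_mul_invUnitsSub_of_mul_coe_eq {A : PowerSeries K} {β : ι → Kˣ}
    (hA : A * (R : PowerSeries K) = P) (hdeg : R.degree = Fintype.card ι)
    (hP : P.degree < R.degree) (hβ : Function.Injective β) (hroot : ∀ j, R.IsRoot (β j : K)) :
    A = ∑ j, PowerSeries.C (-(P.eval (β j : K) / R.derivative.eval (β j : K))) *
      PowerSeries.invUnitsSub (β j) := by
  have hR : (R : PowerSeries K) ≠ 0 := coe_eq_zero_iff.not.mpr (ne_zero_of_degree_gt hP)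
  have hP_eq := sum_C_eval_div_eval_derivative_mul_div_X_sub_C hdeg hP
    (Units.val_injective.comp hβ) hroot
  refine mul_right_cancel₀ hR ?_
  rw [hA, Finset.sum_mul, ← coeToPowerSeries.ringHom_apply,
    ← congrArg coeToPowerSeries.ringHom hP_eq, map_sum]
  refine Finset.sum_congr rfl fun j _ => ?_
  rw [mul_assoc, invUnitsSub_mul_coe_of_isRoot (hroot j), coeToPowerSeries.ringHom_apply, coe_mul,
    coe_C, map_neg, neg_mul_neg, Function.comp_apply]

theorem coeff_eq_sum_of_mul_coe_eq {A : PowerSeries K} (hA : A * (R : PowerSeries K) = P)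
    (hdeg : R.degree = Fintype.card ι) (hP : P.degree < R.degree)
    (hβ : Function.Injective β) (hβ₀ : ∀ j, β j ≠ 0) (hroot : ∀ j, R.IsRoot (β j)) (n : ℕ) :
    PowerSeries.coeff n A =
      ∑ j, -(P.eval (β j) / (β j * R.derivative.eval (β j))) * (β j)⁻¹ ^ n := by
  lift β to ι → Kˣ using fun j => (hβ₀ j).isUnit
  have hβ' : Function.Injective β := fun i j hij => hβ (congrArg Units.val hij)
  rw [eq_sum_C_mul_invUnitsSub_of_mul_coe_eq hA hdeg hP hβ' hroot, map_sum]
  refine Finset.sum_congr rfl fun j _ => ?_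
  rw [PowerSeries.coeff_C_mul, PowerSeries.coeff_invUnitsSub, one_divp, ← inv_pow,
    Units.val_pow_eq_pow_val, Units.val_inv_eq_inv_val]
  ring

end PartialFractions

section Compositions

open Finset

theorem sum_composition_zero {M : Type*} [AddCommMonoid M] (f : List ℕ → M) :
    ∑ m : Composition 0, f m.blocks = f [] := by
  have hnil (m : Composition 0) : m.blocks = [] := m.blocks_eq_nil.mpr rfl
  simp [hnil, composition_card]

theorem sum_composition_succ {M : Type*} [AddCommMonoid M] (f : List ℕ → M) (n : ℕ) :
    ∑ m : Composition (n + 1), f m.blocks =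
      ∑ p ∈ antidiagonal n, ∑ m : Composition p.2, f ((p.1 + 1) :: m.blocks) := by
  rw [sum_sigma']
  symm
  refine sum_bij (fun x hx => ((Composition.single (x.1.1 + 1) x.1.1.succ_pos).append x.2).cast
    (by have := mem_antidiagonal.mp (mem_sigma.mp hx).1; omega)) ?_ ?_ ?_ ?_
  · simp
  · rintro ⟨⟨i, j⟩, m⟩ _ ⟨⟨i', j'⟩, m'⟩ _ h
    obtain ⟨rfl, hblocks⟩ : i = i' ∧ m.blocks = m'.blocks := by
      simpa using congrArg Composition.blocks h
    cases Composition.sigma_eq_iff_blocks_eq (c := ⟨j, m⟩) (c' := ⟨j', m'⟩) |>.mpr hblocks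
    rfl
  · rintro ⟨blocks, pos, sum⟩ _
    cases blocks with
    | nil => simp at sum
    | cons a l =>
      have ha : a - 1 + 1 = a := Nat.sub_add_cancel (pos List.mem_cons_self)
      have hsum : a - 1 + l.sum = n := by rw [List.sum_cons] at sum; omega
      exact ⟨⟨(a - 1, l.sum), l, fun h => pos (List.mem_cons_of_mem a h), rfl⟩, by simp [hsum],
        by ext1; simp [ha]⟩
  · simp

/-- The generating series whose `n`-th coefficient is the sum, over the compositions of `n`, of the
product of the weights `w j` of their parts `j`. -/
noncomputable def compositionSeries {S : Type*} [Semiring S] (w : ℕ → S) : PowerSeries S :=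
  PowerSeries.mk fun n => ∑ m : Composition n, (m.blocks.map w).prod

theorem compositionSeries_eq_one_add {S : Type*} [Semiring S] (w : ℕ → S) :
    compositionSeries w =
      1 + PowerSeries.X * (PowerSeries.mk fun j => w (j + 1)) * compositionSeries w := by
  ext n
  rw [map_add, compositionSeries, PowerSeries.coeff_mk, mul_assoc]
  cases n with
  | zero => simp [sum_composition_zero fun l => (l.map w).prod]
  | succ n =>
    rw [sum_composition_succ fun l => (l.map w).prod, PowerSeries.coeff_succ_X_mul]
    simp [PowerSeries.coeff_mul, mul_sum, PowerSeries.coeff_one]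

end Compositions

section Parity

open Finset

variable {α : Type*}

theorem card_even_add_card_odd (s : Finset α) (f : α → ℕ) :
    #{a ∈ s | Even (f a)} + #{a ∈ s | Odd (f a)} = #s := by
  simp_rw [← Nat.not_even_iff_odd]
  exact card_filter_add_card_filter_not _

theorem sum_neg_one_pow_eq_card_even_sub_card_odd {S : Type*} [Ring S] (s : Finset α) (f : α → ℕ) :
    ∑ a ∈ s, (-1 : S) ^ f a = #{a ∈ s | Even (f a)} - #{a ∈ s | Odd (f a)} := by
  simp_rw [natCast_card_filter, ← sum_sub_distrib, ← Nat.not_even_iff_odd]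
  refine sum_congr rfl fun a _ => ?_
  by_cases h : Even (f a)
  · simp [h]
  · simp [h, (Nat.not_even_iff_odd.mp h).neg_one_pow]

theorem prod_map_ite_neg_one_one {S : Type*} [CommRing S] (p : α → Prop) [DecidablePred p]
    (l : List α) : (l.map fun a => if p a then (-1 : S) else 1).prod = (-1) ^ l.countP p := by
  simp [List.prod_map_ite, List.countP_eq_length_filter]

end Parity

section SignedCount

open Polynomial

variable {S : Type*} [CommRing S] {k N : ℕ}

/-- The factor contributed by a part `j` of a composition `m` to the sign `(-1) ^ Bstat k m`.
Its value at `0`, which is never a part, is `1`. -/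
def partSign (S : Type*) [Ring S] (k j : ℕ) : S := if Even j ∧ k < j then -1 else 1

theorem coeff_compositionSeries_partSign (k n : ℕ) :
    PowerSeries.coeff n (compositionSeries (partSign S k)) =
      ∑ m : Composition n, (-1) ^ Bstat k m := by
  rw [compositionSeries, PowerSeries.coeff_mk]
  exact Finset.sum_congr rfl fun m _ => prod_map_ite_neg_one_one _ _

theorem partSign_add_two (hN : Even N) (hkN : k < N) (hNk : N ≤ k + 2) (j : ℕ) :
    partSign S k (j + 2) = partSign S k j - if j + 2 = N then 2 else 0 := by
  simp only [partSign, Nat.even_iff] at hN ⊢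
  split_ifs <;> first | omega | norm_num

theorem one_sub_X_sq_mul_mk_partSign (hN : Even N) (hkN : k < N) (hNk : N ≤ k + 2) :
    (1 - PowerSeries.X ^ 2) * PowerSeries.mk (partSign S k) =
      1 + PowerSeries.X - 2 * PowerSeries.X ^ N := by
  have hN₀ : 0 ≠ N := by omega
  have hN₁ : 1 ≠ N := by rintro rfl; exact absurd hN (by decide)
  ext n
  rw [sub_mul, one_mul, ← map_ofNat PowerSeries.C]
  simp only [map_sub, map_add, PowerSeries.coeff_X_pow_mul', PowerSeries.coeff_mk,
    PowerSeries.coeff_one, PowerSeries.coeff_X, PowerSeries.coeff_C_mul, PowerSeries.coeff_X_pow]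
  match n with
  | 0 => simp [partSign, hN₀]
  | 1 => simp [partSign, hN₁]
  | n + 2 => simp [partSign_add_two hN hkN hNk]

/-- The polynomial `R̃_k` of the paper, with `N` standing for its degree `k + δ`. -/
noncomputable def signedDenominator (S : Type*) [CommRing S] (N : ℕ) : S[X] :=
  (1 - 2 * X) * (1 + X) + 2 * X ^ N

theorem compositionSeries_partSign_mul_signedDenominator (hN : Even N) (hkN : k < N)
    (hNk : N ≤ k + 2) :
    compositionSeries (partSign S k) * (signedDenominator S N : PowerSeries S) =
      ((1 - X ^ 2 : S[X]) : PowerSeries S) := by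
  have hcoe : (signedDenominator S N : PowerSeries S) =
      (1 - 2 * PowerSeries.X) * (1 + PowerSeries.X) + 2 * PowerSeries.X ^ N := by
    simp [signedDenominator, ← map_ofNat C, ← map_ofNat PowerSeries.C]
  have hseries := compositionSeries_eq_one_add (partSign S k)
  have hshift : PowerSeries.mk (partSign S k) =
      PowerSeries.X * (PowerSeries.mk fun j => partSign S k (j + 1)) + 1 := by
    simpa [partSign] using PowerSeries.eq_X_mul_shift_add_const (PowerSeries.mk (partSign S k))
  have hsign := one_sub_X_sq_mul_mk_partSign (S := S) hN hkN hNk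
  rw [hshift] at hsign
  rw [hcoe, coe_sub, coe_one, coe_pow, coe_X]
  linear_combination (1 - PowerSeries.X ^ 2) * hseries +
    compositionSeries (partSign S k) * hsign

theorem not_isRoot_zero_signedDenominator [Nontrivial S] (hN : N ≠ 0) :
    ¬(signedDenominator S N).IsRoot 0 := by
  simp [signedDenominator, hN]

variable {K : Type*} [Field K] [NeZero (2 : K)]

theorem degree_signedDenominator (hN : 2 < N) : (signedDenominator K N).degree = N := by
  have hlow : ((1 - 2 * X) * (1 + X) : K[X]).degree ≤ 2 := by compute_degree
  have htop : (2 * X ^ N : K[X]).degree = N := by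
    rw [← map_ofNat C, degree_C_mul_X_pow _ two_ne_zero]
  rw [signedDenominator, degree_add_eq_right_of_degree_lt, htop]
  rw [htop]
  exact hlow.trans_lt (by exact_mod_cast hN)

theorem sum_neg_one_pow_Bstat {ι : Type*} [Fintype ι] {β : ι → K} (hN : Even N) (hkN : k < N)
    (hNk : N ≤ k + 2) (hN₂ : 2 < N) (hcard : Fintype.card ι = N) (hβ : Function.Injective β)
    (hroot : ∀ j, (signedDenominator K N).IsRoot (β j)) (n : ℕ) :
    ∑ m : Composition n, (-1 : K) ^ Bstat k m =
      ∑ j, -((1 - β j ^ 2) / (β j * (signedDenominator K N).derivative.eval (β j))) *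
        (β j)⁻¹ ^ n := by
  have hβ₀ (j : ι) : β j ≠ 0 := fun h =>
    not_isRoot_zero_signedDenominator (by omega) (h ▸ hroot j)
  have hdeg : (signedDenominator K N).degree = N := degree_signedDenominator hN₂
  have hP : (1 - X ^ 2 : K[X]).degree < (signedDenominator K N).degree := by
    have : (1 - X ^ 2 : K[X]).degree ≤ 2 := by compute_degree
    exact this.trans_lt (by rw [hdeg]; exact_mod_cast hN₂)
  rw [← coeff_compositionSeries_partSign, coeff_eq_sum_of_mul_coe_eq
    (compositionSeries_partSign_mul_signedDenominator hN hkN hNk) (by rw [hdeg, hcard]) hP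
    hβ hβ₀ hroot]
  simp only [eval_sub, eval_one, eval_pow, eval_X]

end SignedCount

theorem stmt9_general {K : Type*} [Field K] [NeZero (2 : K)] (k : ℕ) (hk : 2 ≤ k) (δ : ℕ)
    (hδ : δ = if Odd k then 1 else 2) (R : Polynomial K)
    (hR : R = (1 - 2 * Polynomial.X) * (1 + Polynomial.X) + 2 * Polynomial.X ^ (k + δ))
    (β : Fin (k + δ) → K) (hβ : Function.Injective β) (hroot : ∀ j, R.IsRoot (β j))
    (n : ℕ) (hn : 1 ≤ n) (E O : ℕ)
    (hE : E = (Finset.univ.filter fun m : Composition n => Even (Bstat k m)).card)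
    (hO : O = (Finset.univ.filter fun m : Composition n => Odd (Bstat k m)).card) :
    (E : K) = (2 : K) ^ ((n : ℤ) - 2)
        + (1 / 2) * ∑ j : Fin (k + δ),
            (-((1 - β j ^ 2) / (β j * R.derivative.eval (β j)))) * (β j)⁻¹ ^ n ∧
    (O : K) = (2 : K) ^ ((n : ℤ) - 2)
        - (1 / 2) * ∑ j : Fin (k + δ),
            (-((1 - β j ^ 2) / (β j * R.derivative.eval (β j)))) * (β j)⁻¹ ^ n := by
  have hparity : Even (k + δ) ∧ 1 ≤ δ ∧ δ ≤ 2 := by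
    rw [Nat.even_iff]
    split_ifs at hδ with h <;> rw [Nat.odd_iff] at h <;> omega
  obtain rfl : R = signedDenominator K (k + δ) := hR
  have hdiff := sum_neg_one_pow_Bstat (k := k) hparity.1 (by omega) (by omega) (by omega)
    (Fintype.card_fin _) hβ hroot n
  rw [sum_neg_one_pow_eq_card_even_sub_card_odd, ← hE, ← hO] at hdiff
  have hsum : (E : K) + O = 2 * 2 ^ ((n : ℤ) - 2) := by
    have hcard : E + O = 2 ^ (n - 1) := by
      rw [hE, hO, card_even_add_card_odd, Finset.card_univ, composition_card]
    rw [← zpow_one_add₀ two_ne_zero, show 1 + ((n : ℤ) - 2) = (n - 1 : ℕ) by omega, zpow_natCast]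
    simpa using congrArg (Nat.cast : ℕ → K) hcard
  have htwo : (2 : K) ≠ 0 := two_ne_zero
  rw [← hdiff]
  constructor <;> field_simp <;> linear_combination hsum

theorem stmt9 (k : ℕ) (hk : 2 ≤ k) (δ : ℕ) (hδ : δ = if Odd k then 1 else 2)
    (R : Polynomial ℂ)
    (hR : R = (1 - 2 * Polynomial.X) * (1 + Polynomial.X) + 2 * Polynomial.X ^ (k + δ))
    (β : Fin (k + δ) → ℂ) (hβ : Function.Injective β) (hroot : ∀ j, R.IsRoot (β j))
    (n : ℕ) (hn : 1 ≤ n)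
    (E O : ℕ)
    (hE : E = (Finset.univ.filter fun m : Composition n => Even (Bstat k m)).card)
    (hO : O = (Finset.univ.filter fun m : Composition n => Odd (Bstat k m)).card) :
    (E : ℂ) = (2 : ℂ) ^ ((n : ℤ) - 2)
        + (1 / 2) * ∑ j : Fin (k + δ),
            (-((1 - β j ^ 2) / (β j * R.derivative.eval (β j)))) * (β j)⁻¹ ^ n ∧
    (O : ℂ) = (2 : ℂ) ^ ((n : ℤ) - 2)
        - (1 / 2) * ∑ j : Fin (k + δ),
            (-((1 - β j ^ 2) / (β j * R.derivative.eval (β j)))) * (β j)⁻¹ ^ n :=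
  stmt9_general k hk δ hδ R hR β hβ hroot n hn E O hE hO
end

section
/- Let k ≥ 1 be a fixed integer and let ℓ ≥ 0 be a fixed integer. For n ≥ 0 let F_{k,ℓ}(n) denote the number of compositions m = (m_1, …, m_r) of n with r ≥ ℓ + 1, m_t ∉ Ev_{>k} for all 1 ≤ t ≤ ℓ, and m_{ℓ+1} ∈ Ev_{>k} (i.e. compositions whose first part lying in Ev_{>k} occurs exactly at position ℓ + 1). Let S(x) = Σ_{j≥1, j∉Ev_{>k}} x^j and B(x) = Σ_{j∈Ev_{>k}} x^j in ℤ[[x]]. Then in ℤ[[x]]: (1 − 2x) · Σ_{n≥0} F_{k,ℓ}(n)·x^n = (1 − x)·S(x)^ℓ·B(x). -/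
open PowerSeries

/-- `Fcount k ℓ n` is the number of compositions of `n` with at least `ℓ + 1` parts,
whose first `ℓ` parts are not even integers greater than `k`, and whose `(ℓ+1)`-st part
is an even integer greater than `k`. -/
def Fcount (k ℓ n : ℕ) : ℕ :=
  (Finset.univ.filter fun m : Composition n =>
    ℓ + 1 ≤ m.blocks.length ∧
      (∀ t < ℓ, ¬(Even (m.blocks.getD t 0) ∧ k < m.blocks.getD t 0)) ∧
      (Even (m.blocks.getD ℓ 0) ∧ k < m.blocks.getD ℓ 0)).card

/-- `Sgen k = Σ_{j ≥ 1, j ∉ Ev_{>k}} x^j ∈ ℤ[[x]]`. -/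
noncomputable def Sgen (k : ℕ) : PowerSeries ℤ :=
  PowerSeries.mk fun j => if 1 ≤ j ∧ ¬(Even j ∧ k < j) then 1 else 0

/-- `Bgen k = Σ_{j ∈ Ev_{>k}} x^j ∈ ℤ[[x]]`. -/
noncomputable def Bgen (k : ℕ) : PowerSeries ℤ :=
  PowerSeries.mk fun j => if Even j ∧ k < j then 1 else 0

/-!
Splitting off the first part of a composition gives one factor of the generating function for
each constrained part. After the constrained prefix, what remains is an arbitrary composition,
and since `n` has `2 ^ (n - 1)` compositions (truncated subtraction gives the correct value `1`
at `n = 0`) these contribute the factor `(1 - x) / (1 - 2x)`.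
-/

section CompositionSeries

open scoped Finset

/-- The composition of `n = a + b` obtained by putting the part `a` in front of a
composition of `b`. -/
def consComposition {a b n : ℕ} (ha : 1 ≤ a) (hn : a + b = n) (m : Composition b) :
    Composition n where
  blocks := a :: m.blocks
  blocks_pos := List.forall_mem_cons.2 ⟨ha, fun _ => m.blocks_pos⟩ _
  blocks_sum := by rw [List.sum_cons, m.blocks_sum, hn]

theorem eq_of_consComposition_eq {n : ℕ} {x y : Σ ab : ℕ × ℕ, Composition ab.2}
    {hx : 1 ≤ x.1.1} {hy : 1 ≤ y.1.1} {hxn : x.1.1 + x.1.2 = n} {hyn : y.1.1 + y.1.2 = n}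
    (h : consComposition hx hxn x.2 = consComposition hy hyn y.2) : x = y := by
  obtain ⟨⟨a, b⟩, m⟩ := x
  obtain ⟨⟨a', b'⟩, m'⟩ := y
  obtain ⟨rfl, hblocks⟩ := List.cons.inj (congrArg Composition.blocks h)
  obtain rfl : b = b' := Nat.add_left_cancel (hxn.trans hyn.symm)
  obtain rfl : m = m' := Composition.ext hblocks
  rfl

theorem exists_consComposition_eq {n a : ℕ} {l : List ℕ} (m : Composition n)
    (hm : m.blocks = a :: l) :
    ∃ (b : ℕ) (ha : 1 ≤ a) (hn : a + b = n) (m' : Composition b),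
      m'.blocks = l ∧ consComposition ha hn m' = m :=
  have hpos : ∀ i ∈ a :: l, 1 ≤ i := fun _ hi => m.one_le_blocks (hm ▸ hi)
  have hsum : a + l.sum = n := by rw [← List.sum_cons, ← hm, m.blocks_sum]
  ⟨l.sum, hpos a List.mem_cons_self, hsum,
    ⟨l, fun hi => hpos _ (List.mem_cons_of_mem a hi), rfl⟩, rfl, Composition.ext hm.symm⟩

theorem card_compositions_eq_sum_antidiagonal {P Q : List ℕ → Prop} {p : ℕ → Prop}
    [DecidablePred P] [DecidablePred Q] [DecidablePred p] (hnil : ¬P [])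
    (hcons : ∀ a l, P (a :: l) ↔ p a ∧ Q l) (n : ℕ) :
    #{m : Composition n | P m.blocks} =
      ∑ ab ∈ Finset.HasAntidiagonal.antidiagonal n with 1 ≤ ab.1 ∧ p ab.1,
        #{m : Composition ab.2 | Q m.blocks} := by
  rw [← Finset.card_sigma]
  symm
  have mem_sigma_iff (x : Σ ab : ℕ × ℕ, Composition ab.2) :
      x ∈ ({ab ∈ Finset.HasAntidiagonal.antidiagonal n | 1 ≤ ab.1 ∧ p ab.1}.sigma
          fun ab => {m : Composition ab.2 | Q m.blocks}) ↔
        (x.1.1 + x.1.2 = n ∧ 1 ≤ x.1.1 ∧ p x.1.1) ∧ Q x.2.blocks := by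
    simp only [Finset.mem_sigma, Finset.mem_filter, Finset.HasAntidiagonal.mem_antidiagonal,
      Finset.mem_univ, true_and]
  refine Finset.card_bij
    (fun x hx => consComposition ((mem_sigma_iff x).1 hx).1.2.1 ((mem_sigma_iff x).1 hx).1.1 x.2)
    (fun x hx => ?maps_to) (fun _ _ _ _ => eq_of_consComposition_eq) (fun m hm => ?surjective)
  case maps_to =>
    obtain ⟨⟨-, -, hp⟩, hQ⟩ := (mem_sigma_iff x).1 hx
    exact Finset.mem_filter.2 ⟨Finset.mem_univ _, (hcons _ _).2 ⟨hp, hQ⟩⟩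
  case surjective =>
    have hP : P m.blocks := (Finset.mem_filter.1 hm).2
    obtain ⟨a, l, hblocks⟩ := List.exists_cons_of_ne_nil fun h : m.blocks = [] => hnil (h ▸ hP)
    obtain ⟨b, ha, hn, m', rfl, hm'⟩ := exists_consComposition_eq m hblocks
    obtain ⟨hp, hQ⟩ := (hcons _ _).1 (hblocks ▸ hP)
    exact ⟨⟨(a, b), m'⟩, (mem_sigma_iff _).2 ⟨⟨hn, ha, hp⟩, hQ⟩, hm'⟩

section Semiring

variable (R : Type*) [Semiring R]

/-- The generating function `Σ x ^ j` of the possible values `j ≥ 1` of a single part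
satisfying `p`. -/
def partSeries (p : ℕ → Prop) [DecidablePred p] : R⟦X⟧ :=
  PowerSeries.mk fun j => if 1 ≤ j ∧ p j then 1 else 0

/-- The generating function of the compositions with at least `ℓ` parts whose `t`-th part,
counted from `0`, satisfies `p t` for every `t < ℓ`. -/
def prefixSeries (p : ℕ → ℕ → Prop) [∀ t, DecidablePred (p t)] (ℓ : ℕ) : R⟦X⟧ :=
  PowerSeries.mk fun n =>
    (#{m : Composition n | ℓ ≤ m.blocks.length ∧ ∀ t < ℓ, p t (m.blocks.getD t 0)} : R)

variable (p : ℕ → ℕ → Prop) [∀ t, DecidablePred (p t)]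

theorem prefixSeries_zero : prefixSeries R p 0 = PowerSeries.mk fun n => 2 ^ (n - 1) := by
  simp [prefixSeries, composition_card]

theorem prefixSeries_succ (ℓ : ℕ) :
    prefixSeries R p (ℓ + 1) = partSeries R (p 0) * prefixSeries R (fun t => p (t + 1)) ℓ := by
  ext n
  have hcons (a : ℕ) (l : List ℕ) :
      (ℓ + 1 ≤ (a :: l).length ∧ ∀ t < ℓ + 1, p t ((a :: l).getD t 0)) ↔
        p 0 a ∧ ℓ ≤ l.length ∧ ∀ t < ℓ, p (t + 1) (l.getD t 0) := by
    simp only [List.length_cons, Nat.add_le_add_iff_right, Nat.forall_lt_succ_left,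
      List.getD_cons_zero, List.getD_cons_succ]
    exact and_left_comm
  have hcard := card_compositions_eq_sum_antidiagonal
    (P := fun l => ℓ + 1 ≤ l.length ∧ ∀ t < ℓ + 1, p t (l.getD t 0))
    (Q := fun l => ℓ ≤ l.length ∧ ∀ t < ℓ, p (t + 1) (l.getD t 0))
    (by simp) hcons n
  simp only [coeff_mul, prefixSeries, partSeries, coeff_mk, ite_mul, one_mul, zero_mul, hcard,
    Nat.cast_sum, Finset.sum_filter, Nat.cast_ite, Nat.cast_zero]

end Semiring

theorem prefixSeries_eq_prod_mul (R : Type*) [CommSemiring R] (p : ℕ → ℕ → Prop)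
    [∀ t, DecidablePred (p t)] (ℓ : ℕ) :
    prefixSeries R p ℓ =
      (∏ t ∈ Finset.range ℓ, partSeries R (p t)) * PowerSeries.mk fun n => 2 ^ (n - 1) := by
  induction ℓ generalizing p with
  | zero => rw [prefixSeries_zero, Finset.prod_range_zero, one_mul]
  | succ ℓ ih =>
    rw [prefixSeries_succ, ih, Finset.prod_range_succ', ← mul_assoc,
      mul_comm (partSeries R (p 0))]

section Ring

variable (R : Type*) [CommRing R]

theorem one_sub_two_mul_X_mul_mk_two_pow_pred :
    (1 - 2 * X) * (PowerSeries.mk fun n => 2 ^ (n - 1)) = (1 - X : R⟦X⟧) := by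
  have htwo : (2 : R⟦X⟧) = C 2 := (map_ofNat C 2).symm
  ext n
  rw [sub_mul, one_mul, htwo, mul_assoc, map_sub, coeff_C_mul, map_sub]
  rcases n with _ | _ | n
  · simp
  · norm_num [coeff_succ_X_mul, coeff_one]
  · simp [coeff_succ_X_mul, coeff_one, coeff_X, pow_succ']

theorem one_sub_two_mul_X_mul_prefixSeries (p : ℕ → ℕ → Prop) [∀ t, DecidablePred (p t)]
    (ℓ : ℕ) :
    (1 - 2 * X) * prefixSeries R p ℓ =
      (1 - X) * ∏ t ∈ Finset.range ℓ, partSeries R (p t) := by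
  rw [prefixSeries_eq_prod_mul, mul_left_comm, one_sub_two_mul_X_mul_mk_two_pow_pred, mul_comm]

theorem stmt14_general (E : ℕ → Prop) [DecidablePred E] (ℓ : ℕ) :
    (1 - 2 * X) * PowerSeries.mk (fun n =>
        (#{m : Composition n | ℓ + 1 ≤ m.blocks.length ∧
          (∀ t < ℓ, ¬E (m.blocks.getD t 0)) ∧ E (m.blocks.getD ℓ 0)} : R)) =
      (1 - X) * partSeries R (fun j => ¬E j) ^ ℓ * partSeries R E := by
  have hprefix (l : List ℕ) : (∀ t < ℓ + 1, (E (l.getD t 0) ↔ t = ℓ)) ↔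
      (∀ t < ℓ, ¬E (l.getD t 0)) ∧ E (l.getD ℓ 0) := by
    simp only [Nat.forall_lt_succ_right, iff_true]
    exact and_congr_left' (forall₂_congr fun t ht => iff_false_right ht.ne)
  have hprod : ∏ t ∈ Finset.range (ℓ + 1), partSeries R (fun j => E j ↔ t = ℓ) =
      partSeries R (fun j => ¬E j) ^ ℓ * partSeries R E := by
    rw [Finset.prod_range_succ, Finset.prod_congr rfl
      (g := fun _ => partSeries R (fun j => ¬E j)), Finset.prod_const, Finset.card_range]
    · simp [partSeries]
    · intro t ht
      simp [partSeries, (Finset.mem_range.1 ht).ne]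
  simpa only [prefixSeries, hprefix, hprod, mul_assoc] using
    one_sub_two_mul_X_mul_prefixSeries R (fun t j => E j ↔ t = ℓ) (ℓ + 1)

end Ring

end CompositionSeries

theorem Sgen_eq_partSeries (k : ℕ) : Sgen k = partSeries ℤ fun j => ¬(Even j ∧ k < j) :=
  rfl

theorem Bgen_eq_partSeries (k : ℕ) : Bgen k = partSeries ℤ fun j => Even j ∧ k < j := by
  ext j
  simp only [Bgen, partSeries, coeff_mk]
  exact if_congr (and_iff_right_of_imp fun h => Nat.one_le_of_lt h.2).symm rfl rfl

theorem stmt14 (k : ℕ) (hk : 1 ≤ k) (ℓ : ℕ) :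
    (1 - 2 * PowerSeries.X) * PowerSeries.mk (fun n => (Fcount k ℓ n : ℤ))
      = (1 - PowerSeries.X) * Sgen k ^ ℓ * Bgen k := by
  rw [Sgen_eq_partSeries, Bgen_eq_partSeries]
  exact stmt14_general ℤ (fun j => Even j ∧ k < j) ℓ
end
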